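/- arXiv:2212.04796 — 7 statements merged into one kernel-verified Lean document; each statement's English description precedes it below -/
import Mathlib

section
/- Let V be a real Hilbert space, ν > 0, M ≥ 0, N ≥ 0. Let a : V × V → ℝ be a bilinear map with a(v,v) ≥ ν‖v‖² and |a(u,v)| ≤ M‖u‖‖v‖ for all u, v ∈ V; let c̃ : V × V × V → ℝ be a trilinear map with c̃(u,w,w) = 0 for all u, w ∈ V and |c̃(u,v,w)| ≤ N‖u‖‖v‖‖w‖ for all u, v, w ∈ V; let F : V → ℝ be a continuous linear functional with operator norm ‖F‖. If N·‖F‖/ν² < 1, then there exists exactly one y ∈ V such that a(y,v) + c̃(y,y,v) = F(v) for all v ∈ V, and this y satisfies ‖y‖ ≤ ‖F‖/ν. -/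
/-- Existence and uniqueness for the abstract steady Navier–Stokes problem
in a real Hilbert space, under the smallness condition `N·‖F‖/ν² < 1`. -/
theorem stmt_3 (V : Type*) [NormedAddCommGroup V] [InnerProductSpace ℝ V] [CompleteSpace V]
    (ν M N : ℝ) (hν : 0 < ν) (hM : 0 ≤ M) (hN : 0 ≤ N)
    (a : V →ₗ[ℝ] V →ₗ[ℝ] ℝ)
    (ha_coer : ∀ v, ν * ‖v‖ ^ 2 ≤ a v v)
    (ha_bdd : ∀ u v, |a u v| ≤ M * ‖u‖ * ‖v‖)
    (ct : V →ₗ[ℝ] V →ₗ[ℝ] V →ₗ[ℝ] ℝ)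
    (hct_skew : ∀ u w, ct u w w = 0)
    (hct_bdd : ∀ u v w, |ct u v w| ≤ N * ‖u‖ * ‖v‖ * ‖w‖)
    (F : V →L[ℝ] ℝ)
    (hsmall : N * ‖F‖ / ν ^ 2 < 1) :
    ∃ y : V, (∀ v, a y v + ct y y v = F v) ∧ ‖y‖ ≤ ‖F‖ / ν ∧
      ∀ z : V, (∀ v, a z v + ct z z v = F v) → z = y := by
  have hbound : ∀ w u : V, (∀ v, a u v + ct w u v = F v) → ‖u‖ ≤ ‖F‖ / ν := by
    intro w u h
    have h1 := h u
    rw [hct_skew, add_zero] at h1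
    have h2 := ha_coer u
    have h3 : F u ≤ ‖F‖ * ‖u‖ := (le_abs_self _).trans (F.le_opNorm u)
    rw [le_div_iff₀ hν]
    rcases (norm_nonneg u).eq_or_lt with h0 | h0
    · rw [← h0, zero_mul]; exact norm_nonneg F
    · refine le_of_mul_le_mul_right ?_ h0
      nlinarith
  have hcontr : ∀ w₁ w₂ u₁ u₂ : V, (∀ v, a u₁ v + ct w₁ u₁ v = F v) →
      (∀ v, a u₂ v + ct w₂ u₂ v = F v) →
      ‖u₁ - u₂‖ ≤ N * ‖F‖ / ν ^ 2 * ‖w₁ - w₂‖ := by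
    intro w₁ w₂ u₁ u₂ h₁ h₂
    have hu := hbound w₂ u₂ h₂
    have e1 := h₁ (u₁ - u₂)
    have e2 := h₂ (u₁ - u₂)
    have e3 := hct_skew w₁ (u₁ - u₂)
    have hc := ha_coer (u₁ - u₂)
    have hb := (neg_le_abs _).trans (hct_bdd (w₁ - w₂) u₂ (u₁ - u₂))
    have e4 : a (u₁ - u₂) (u₁ - u₂) = -(ct (w₁ - w₂) u₂ (u₁ - u₂)) := by
      have x1 : a (u₁ - u₂) (u₁ - u₂) = a u₁ (u₁ - u₂) - a u₂ (u₁ - u₂) := by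
        rw [map_sub a, LinearMap.sub_apply]
      have x2 : ct (w₁ - w₂) u₂ (u₁ - u₂) = ct w₁ u₂ (u₁ - u₂) - ct w₂ u₂ (u₁ - u₂) := by
        rw [map_sub ct, LinearMap.sub_apply, LinearMap.sub_apply]
      have x3 : ct w₁ (u₁ - u₂) (u₁ - u₂) = ct w₁ u₁ (u₁ - u₂) - ct w₁ u₂ (u₁ - u₂) := by
        rw [map_sub (ct w₁), LinearMap.sub_apply]
      linarith
    have h5 : ν * ‖u₁ - u₂‖ ^ 2 ≤ N * ‖w₁ - w₂‖ * (‖F‖ / ν) * ‖u₁ - u₂‖ := by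
      calc _ ≤ N * ‖w₁ - w₂‖ * ‖u₂‖ * ‖u₁ - u₂‖ := by linarith
        _ ≤ _ := by gcongr
    have h6 : ν * ‖u₁ - u₂‖ ≤ N * ‖w₁ - w₂‖ * (‖F‖ / ν) := by
      rcases (norm_nonneg (u₁ - u₂)).eq_or_lt with h0 | h0
      · rw [← h0, mul_zero]; positivity
      · refine le_of_mul_le_mul_right ?_ h0
        nlinarith
    refine le_of_mul_le_mul_left (h6.trans (le_of_eq ?_)) hν
    field_simp
  have hex : ∀ w : V, ∃ u : V, ∀ v, a u v + ct w u v = F v := by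
    intro w
    let B : V →L[ℝ] V →L[ℝ] ℝ := (a + ct w).mkContinuous₂ (M + N * ‖w‖) (by
      intro x y
      have h1 := ha_bdd x y
      have h2 := hct_bdd w x y
      have h3 := abs_add_le (a x y) (ct w x y)
      rw [LinearMap.add_apply, LinearMap.add_apply, Real.norm_eq_abs]
      nlinarith)
    have hB : ∀ x y, B x y = a x y + ct w x y := fun x y => rfl
    have hco : IsCoercive B := ⟨ν, hν, fun u => by
      rw [hB, hct_skew, add_zero]
      have := ha_coer u
      nlinarith⟩
    refine ⟨hco.continuousLinearEquivOfBilin.symm ((InnerProductSpace.toDual ℝ V).symm F), ?_⟩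
    intro v
    rw [← hB, ← hco.continuousLinearEquivOfBilin_apply,
      ContinuousLinearEquiv.apply_symm_apply, InnerProductSpace.toDual_symm_apply]
  choose f hf using hex
  have hK : 0 ≤ N * ‖F‖ / ν ^ 2 := by positivity
  have hfc : ContractingWith ⟨N * ‖F‖ / ν ^ 2, hK⟩ f :=
    ⟨hsmall, LipschitzWith.of_dist_le_mul fun x y => by
      rw [dist_eq_norm, dist_eq_norm]
      exact hcontr x y _ _ (hf x) (hf y)⟩
  have hfix : f (ContractingWith.fixedPoint f hfc) = ContractingWith.fixedPoint f hfc :=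
    hfc.fixedPoint_isFixedPt
  generalize ContractingWith.fixedPoint f hfc = y at hfix
  have hy := hf y
  rw [hfix] at hy
  refine ⟨y, hy, hbound y y hy, fun z hz => ?_⟩
  have h := hcontr z y z y hz hy
  have h0 : ‖z - y‖ = 0 := by
    have := norm_nonneg (z - y)
    by_contra hne
    have hp : 0 < ‖z - y‖ := lt_of_le_of_ne this (Ne.symm hne)
    nlinarith
  exact sub_eq_zero.mp (norm_eq_zero.mp h0)
end

section
/- Let V be a real normed vector space, ν > 0, N ≥ 0, f ≥ 0 with N·f < ν². Let a : V × V → ℝ be a bilinear map with a(v,v) ≥ ν‖v‖² for all v ∈ V; let c̃ : V × V × V → ℝ be a trilinear map with c̃(u,w,w) = 0 for all u, w ∈ V and |c̃(u,v,w)| ≤ N‖u‖‖v‖‖w‖ for all u, v, w ∈ V; let F : V → ℝ be a linear map with |F(v)| ≤ f‖v‖ for all v ∈ V. If y, z ∈ V both satisfy a(y,v) + c̃(y,y,v) = F(v) and a(z,v) + c̃(z,z,v) = F(v) for all v ∈ V, then y = z. -/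
/-- Uniqueness for the abstract steady Navier–Stokes problem in a real normed
space under the smallness condition `N·f < ν²`. -/
theorem stmt_4 (V : Type*) [NormedAddCommGroup V] [NormedSpace ℝ V]
    (ν N f : ℝ) (hν : 0 < ν) (hN : 0 ≤ N) (hf : 0 ≤ f)
    (hsmall : N * f < ν ^ 2)
    (a : V →ₗ[ℝ] V →ₗ[ℝ] ℝ)
    (ha_coer : ∀ v, ν * ‖v‖ ^ 2 ≤ a v v)
    (ct : V →ₗ[ℝ] V →ₗ[ℝ] V →ₗ[ℝ] ℝ)
    (hct_skew : ∀ u w, ct u w w = 0)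
    (hct_bdd : ∀ u v w, |ct u v w| ≤ N * ‖u‖ * ‖v‖ * ‖w‖)
    (F : V →ₗ[ℝ] ℝ) (hF : ∀ v, |F v| ≤ f * ‖v‖)
    (y z : V)
    (hy : ∀ v, a y v + ct y y v = F v)
    (hz : ∀ v, a z v + ct z z v = F v) :
    y = z := by
  have hyb : ν * ‖y‖ ≤ f := by
    by_cases h0 : ‖y‖ = 0
    · rw [h0]; simpa using hf
    · have hp : 0 < ‖y‖ := lt_of_le_of_ne (norm_nonneg y) (Ne.symm h0)
      have h1 := hy y
      rw [hct_skew] at h1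
      have h2 := ha_coer y
      have h3 := (abs_le.mp (hF y)).2
      have h4 : (ν * ‖y‖) * ‖y‖ ≤ f * ‖y‖ := by nlinarith
      exact le_of_mul_le_mul_right h4 hp
  have e1 : a (y - z) (y - z) = - ct (y - z) y (y - z) := by
    have h1 := hy (y - z)
    have h2 := hz (y - z)
    have h3 := hct_skew z (y - z)
    have h4 : ct z (y - z) (y - z) = ct z y (y - z) - ct z z (y - z) := by
      rw [map_sub (ct z) y z, LinearMap.sub_apply]
    have h5 : ct (y - z) y (y - z) = ct y y (y - z) - ct z y (y - z) := by
      rw [map_sub ct y z, LinearMap.sub_apply, LinearMap.sub_apply]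
    have h6 : a (y - z) (y - z) = a y (y - z) - a z (y - z) := by
      rw [map_sub a y z, LinearMap.sub_apply]
    linarith
  have h1 := ha_coer (y - z)
  have h2 := (abs_le.mp (hct_bdd (y - z) y (y - z))).1
  by_contra hne
  have hd : 0 < ‖y - z‖ := norm_pos_iff.mpr (sub_ne_zero.mpr hne)
  have h3 : ν * ‖y - z‖ ^ 2 ≤ (N * ‖y‖) * ‖y - z‖ ^ 2 := by nlinarith
  have h4 : ν ≤ N * ‖y‖ := le_of_mul_le_mul_right h3 (by positivity)
  have h5 := mul_le_mul_of_nonneg_left hyb hN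
  have h6 := mul_le_mul_of_nonneg_left h4 hν.le
  nlinarith
end

section
/- Let V be a real vector space, p, q : V → ℝ seminorms, ν > 0, f ≥ 0, ε > 0. Let a_ω, a_Ω : V × V → ℝ be bilinear maps with a_ω(v,v) ≥ ν·p(v)² and a_Ω(v,v) ≥ q(v)² for all v ∈ V; let c_ω, c_Ω : V × V × V → ℝ be trilinear maps with c_ω(u,w,w) = 0 and c_Ω(u,w,w) = 0 for all u, w ∈ V; let F : V → ℝ be linear with |F(v)| ≤ f·p(v) for all v ∈ V. If y ∈ V satisfies a_ω(y,v) + ε·a_Ω(y,v) + c_ω(y,y,v) + ε·c_Ω(y,y,v) = F(v) for all v ∈ V, then p(y) ≤ f/ν and √ε · q(y) ≤ f/√ν. -/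
/-- A priori estimates for the penalized equation (Proposition 2.1 of the
paper, estimates (2.2) and (2.3)), with seminorms `p` and `q` playing the roles of
`|·|_{1,ω}` and `‖·‖_{1,Ω}`. -/
theorem stmt_5 (V : Type*) [AddCommGroup V] [Module ℝ V]
    (p q : Seminorm ℝ V)
    (ν f ε : ℝ) (hν : 0 < ν) (hf : 0 ≤ f) (hε : 0 < ε)
    (aω aΩ : V →ₗ[ℝ] V →ₗ[ℝ] ℝ)
    (haω : ∀ v, ν * p v ^ 2 ≤ aω v v)
    (haΩ : ∀ v, q v ^ 2 ≤ aΩ v v)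
    (cω cΩ : V →ₗ[ℝ] V →ₗ[ℝ] V →ₗ[ℝ] ℝ)
    (hcω : ∀ u w, cω u w w = 0)
    (hcΩ : ∀ u w, cΩ u w w = 0)
    (F : V →ₗ[ℝ] ℝ) (hF : ∀ v, |F v| ≤ f * p v)
    (y : V)
    (heq : ∀ v, aω y v + ε * aΩ y v + cω y y v + ε * cΩ y y v = F v) :
    p y ≤ f / ν ∧ Real.sqrt ε * q y ≤ f / Real.sqrt ν := by
  have hp : 0 ≤ p y := apply_nonneg p y
  have hq : 0 ≤ q y := apply_nonneg q y
  have h1 := heq y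
  rw [hcω, hcΩ] at h1
  have h2 := haω y
  have h3 := mul_le_mul_of_nonneg_left (haΩ y) hε.le
  have h4 := (le_abs_self _).trans (hF y)
  have key : ν * p y ^ 2 + ε * q y ^ 2 ≤ f * p y := by linarith
  have hQ : 0 ≤ ε * q y ^ 2 := by positivity
  constructor
  · rw [le_div_iff₀ hν]
    by_contra! h
    have hpp : 0 < p y := by
      by_contra! h0
      have : p y = 0 := le_antisymm h0 hp
      rw [this] at h
      linarith
    have := mul_lt_mul_of_pos_right h hpp
    nlinarith
  · rw [le_div_iff₀ (Real.sqrt_pos.mpr hν)]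
    refine (sq_le_sq₀ (by positivity) hf).mp ?_
    have e : (√ε * q y * √ν) ^ 2 = ν * (ε * q y ^ 2) := by
      rw [mul_pow, mul_pow, Real.sq_sqrt hε.le, Real.sq_sqrt hν.le]
      ring
    rw [e]
    have h5 := mul_le_mul_of_nonneg_left key hν.le
    nlinarith [sq_nonneg (f - ν * p y), sq_nonneg f, sq_nonneg (ν * p y)]
end

section
/- Let V be a real vector space, p, q : V → ℝ seminorms, ν > 0, f ≥ 0, N_ω ≥ 0, N_Ω ≥ 0, C_E > 0, and let 0 < θ < 1. Let a_ω, a_Ω : V × V → ℝ be bilinear maps with a_ω(v,v) ≥ ν·p(v)², |a_ω(u,v)| ≤ ν·p(u)p(v), a_Ω(v,v) ≥ q(v)², |a_Ω(u,v)| ≤ q(u)q(v); let c_ω, c_Ω : V × V × V → ℝ be trilinear maps with c_ω(u,w,w) = 0, |c_ω(u,v,w)| ≤ N_ω·p(u)p(v)p(w), c_Ω(u,w,w) = 0, |c_Ω(u,v,w)| ≤ N_Ω·q(u)q(v)q(w); let F : V → ℝ be linear with |F(v)| ≤ f·p(v); and let E : V → V be a linear map with p(E(v) − v) = 0 and q(E(v))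 ≤ C_E·p(v) for all v ∈ V. Assume N_Ω·C_E·f/ν ≤ θ. Then for every ε > 0, every y ∈ V satisfying a_ω(y,v) + ε·a_Ω(y,v) + c_ω(y,y,v) + ε·c_Ω(y,y,v) = F(v) for all v ∈ V satisfies q(y) ≤ (1/(1−θ))·C_E·f/ν. -/
/-- Abstract form of Proposition 2.2: under the smallness condition
`N_Ω·C_E·f/ν ≤ θ`, every solution of the penalized equation satisfies the
`ε`-independent bound `q(y) ≤ (1/(1−θ))·C_E·f/ν`. -/
theorem stmt_6 (V : Type*) [AddCommGroup V] [Module ℝ V]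
    (p q : Seminorm ℝ V)
    (ν f Nω NΩ CE θ : ℝ) (hν : 0 < ν) (hf : 0 ≤ f) (hNω : 0 ≤ Nω) (hNΩ : 0 ≤ NΩ)
    (hCE : 0 < CE) (hθ0 : 0 < θ) (hθ1 : θ < 1)
    (aω aΩ : V →ₗ[ℝ] V →ₗ[ℝ] ℝ)
    (haω_coer : ∀ v, ν * p v ^ 2 ≤ aω v v)
    (haω_bdd : ∀ u v, |aω u v| ≤ ν * p u * p v)
    (haΩ_coer : ∀ v, q v ^ 2 ≤ aΩ v v)
    (haΩ_bdd : ∀ u v, |aΩ u v| ≤ q u * q v)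
    (cω cΩ : V →ₗ[ℝ] V →ₗ[ℝ] V →ₗ[ℝ] ℝ)
    (hcω_skew : ∀ u w, cω u w w = 0)
    (hcω_bdd : ∀ u v w, |cω u v w| ≤ Nω * p u * p v * p w)
    (hcΩ_skew : ∀ u w, cΩ u w w = 0)
    (hcΩ_bdd : ∀ u v w, |cΩ u v w| ≤ NΩ * q u * q v * q w)
    (F : V →ₗ[ℝ] ℝ) (hF : ∀ v, |F v| ≤ f * p v)
    (E : V →ₗ[ℝ] V)
    (hE_ext : ∀ v, p (E v - v) = 0)
    (hE_bdd : ∀ v, q (E v) ≤ CE * p v)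
    (hsmall : NΩ * CE * f / ν ≤ θ) :
    ∀ ε : ℝ, 0 < ε → ∀ y : V,
      (∀ v, aω y v + ε * aΩ y v + cω y y v + ε * cΩ y y v = F v) →
      q y ≤ (1 / (1 - θ)) * CE * f / ν := by
  intro ε hε y hy
  have hp0 := apply_nonneg p y
  have hq0 := apply_nonneg q y
  have hqE0 := apply_nonneg q (E y)
  have hp : p y ≤ f / ν := by
    rw [le_div_iff₀ hν]
    have h1 := hy y
    rw [hcω_skew, hcΩ_skew] at h1
    have h2 := haω_coer y
    have h3 := mul_nonneg hε.le ((sq_nonneg _).trans (haΩ_coer y))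
    have h4 := (le_abs_self _).trans (hF y)
    have h5 : p y * (p y * ν) ≤ p y * f := by nlinarith
    rcases hp0.eq_or_lt with h | h
    · rw [← h]; simpa using hf
    · exact le_of_mul_le_mul_left h5 h
  have hM : q (E y) ≤ CE * (f / ν) :=
    (hE_bdd y).trans (mul_le_mul_of_nonneg_left hp hCE.le)
  have hz := hE_ext y
  have e1 : aω y (E y - y) = 0 := by
    have := haω_bdd y (E y - y)
    rw [hz, mul_zero] at this
    exact abs_nonpos_iff.mp this
  have e2 : cω y y (E y - y) = 0 := by
    have := hcω_bdd y y (E y - y)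
    rw [hz, mul_zero] at this
    exact abs_nonpos_iff.mp this
  have e3 : F (E y - y) = 0 := by
    have := hF (E y - y)
    rw [hz, mul_zero] at this
    exact abs_nonpos_iff.mp this
  have h := hy (E y - y)
  rw [e1, e2, e3, map_sub, map_sub, hcΩ_skew] at h
  have h' : ε * (aΩ y (E y) - aΩ y y + cΩ y y (E y)) = 0 := by linarith
  have h'' := (mul_eq_zero.mp h').resolve_left hε.ne'
  have b1 := (le_abs_self _).trans (haΩ_bdd y (E y))
  have b2 := (le_abs_self _).trans (hcΩ_bdd y y (E y))
  have b3 := haΩ_coer y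
  have hN : NΩ * q (E y) ≤ θ := by
    refine (mul_le_mul_of_nonneg_left hM hNΩ).trans (le_of_eq_of_le ?_ hsmall)
    ring
  have hN2 := mul_le_mul_of_nonneg_left hN (sq_nonneg (q y))
  have hM2 := mul_le_mul_of_nonneg_left hM hq0
  have key : q y * (q y * (1 - θ)) ≤ q y * (CE * (f / ν)) := by nlinarith
  have hθ : 0 < 1 - θ := by linarith
  have hMn : 0 ≤ CE * (f / ν) := by positivity
  have fin : q y * (1 - θ) ≤ CE * (f / ν) := by
    rcases hq0.eq_or_lt with h | h
    · rw [← h]; simpa using hMn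
    · exact le_of_mul_le_mul_left key h
  rw [← le_div_iff₀ hθ] at fin
  refine fin.trans_eq ?_
  ring
end

section
/- Let V be a real vector space, p, q : V → ℝ seminorms such that p(v) = 0 and q(v) = 0 imply v = 0, ν > 0, f ≥ 0, N_ω ≥ 0, N_Ω ≥ 0, C_E > 0, and let 0 < θ < 1. Let a_ω, a_Ω : V × V → ℝ be bilinear maps with a_ω(v,v) ≥ ν·p(v)², |a_ω(u,v)| ≤ ν·p(u)p(v), a_Ω(v,v) ≥ q(v)², |a_Ω(u,v)| ≤ q(u)q(v); let c_ω, c_Ω : V × V × V → ℝ be trilinear maps with c_ω(u,w,w) = 0, |c_ω(u,v,w)| ≤ N_ω·p(u)p(v)p(w), c_Ω(u,w,w) = 0, |c_Ω(u,v,w)| ≤ N_Ω·q(u)q(v)q(w); let F : V → ℝ be linear with |F(v)| ≤ f·p(v); and let E : V → V be a linear map with p(E(v) − v) = 0 and q(E(v)) ≤ C_E·p(v) for all v ∈ V. Assume N_ω·f ≤ θ·ν² and N_Ω·C_E·f/ν ≤ θ·(1−θ), set C₁ = (1+2θ)·C_E/((1−θ)·ν), and let 0 < ε < (1−θ)/(θ·ν·C₁²).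 If y, z ∈ V both satisfy a_ω(y,v) + ε·a_Ω(y,v) + c_ω(y,y,v) + ε·c_Ω(y,y,v) = F(v) and a_ω(z,v) + ε·a_Ω(z,v) + c_ω(z,z,v) + ε·c_Ω(z,z,v) = F(v) for all v ∈ V, then y = z. -/
/-- Abstract form of the uniqueness result for the penalized equation
(Proposition 2.4 / "Prop 2.3iii" of the paper): for small penalization parameter `ε`,
the solution of the penalized equation is unique. -/
theorem stmt_8 (V : Type*) [AddCommGroup V] [Module ℝ V]
    (p q : Seminorm ℝ V)
    (hpq : ∀ v : V, p v = 0 → q v = 0 → v = 0)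
    (ν f Nω NΩ CE θ : ℝ) (hν : 0 < ν) (hf : 0 ≤ f) (hNω : 0 ≤ Nω) (hNΩ : 0 ≤ NΩ)
    (hCE : 0 < CE) (hθ0 : 0 < θ) (hθ1 : θ < 1)
    (aω aΩ : V →ₗ[ℝ] V →ₗ[ℝ] ℝ)
    (haω_coer : ∀ v, ν * p v ^ 2 ≤ aω v v)
    (haω_bdd : ∀ u v, |aω u v| ≤ ν * p u * p v)
    (haΩ_coer : ∀ v, q v ^ 2 ≤ aΩ v v)
    (haΩ_bdd : ∀ u v, |aΩ u v| ≤ q u * q v)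
    (cω cΩ : V →ₗ[ℝ] V →ₗ[ℝ] V →ₗ[ℝ] ℝ)
    (hcω_skew : ∀ u w, cω u w w = 0)
    (hcω_bdd : ∀ u v w, |cω u v w| ≤ Nω * p u * p v * p w)
    (hcΩ_skew : ∀ u w, cΩ u w w = 0)
    (hcΩ_bdd : ∀ u v w, |cΩ u v w| ≤ NΩ * q u * q v * q w)
    (F : V →ₗ[ℝ] ℝ) (hF : ∀ v, |F v| ≤ f * p v)
    (E : V →ₗ[ℝ] V)
    (hE_ext : ∀ v, p (E v - v) = 0)
    (hE_bdd : ∀ v, q (E v) ≤ CE * p v)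
    (hsmall1 : Nω * f ≤ θ * ν ^ 2)
    (hsmall2 : NΩ * CE * f / ν ≤ θ * (1 - θ))
    (C₁ : ℝ) (hC₁ : C₁ = (1 + 2 * θ) * CE / ((1 - θ) * ν))
    (ε : ℝ) (hε0 : 0 < ε) (hε1 : ε < (1 - θ) / (θ * ν * C₁ ^ 2))
    (y z : V)
    (hy : ∀ v, aω y v + ε * aΩ y v + cω y y v + ε * cΩ y y v = F v)
    (hz : ∀ v, aω z v + ε * aΩ z v + cω z z v + ε * cΩ z z v = F v) :
    y = z := by
  have p0 := fun v => apply_nonneg p v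
  have q0 := fun v => apply_nonneg q v
  -- energy bound
  have hpy : ν * p y ≤ f := by
    have h1 := hy y
    rw [hcω_skew, hcΩ_skew] at h1
    have h2 := haω_coer y
    have h3 := haΩ_coer y
    have h4 := (abs_le.1 (hF y)).2
    have h5 : 0 ≤ ε * aΩ y y := mul_nonneg hε0.le ((sq_nonneg _).trans h3)
    have h6 : ν * p y ^ 2 ≤ f * p y := by linarith
    rcases (p0 y).eq_or_lt with h | h
    · rw [← h]; simpa using hf
    · refine le_of_mul_le_mul_right ?_ h
      linarith [h6, (by ring : ν * p y ^ 2 = ν * p y * p y)]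
  have hNp : Nω * p y ≤ θ * ν := by
    have h1 := mul_le_mul_of_nonneg_left hpy hNω
    refine le_of_mul_le_mul_right ?_ hν
    nlinarith
  have hNCp : NΩ * CE * p y ≤ θ * (1 - θ) := by
    refine le_trans ?_ hsmall2
    rw [le_div_iff₀ hν]
    have h1 := mul_le_mul_of_nonneg_left hpy (mul_nonneg hNΩ hCE.le)
    linarith
  have hNq : NΩ * q y ≤ θ := by
    have hp : p (y - E y) = 0 := by rw [map_sub_rev]; exact hE_ext y
    have h1 := hy (y - E y)
    have e1 : aω y (y - E y) = 0 := by
      have := haω_bdd y (y - E y)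
      rw [hp, mul_zero] at this
      exact abs_nonpos_iff.1 this
    have e2 : cω y y (y - E y) = 0 := by
      have := hcω_bdd y y (y - E y)
      rw [hp, mul_zero] at this
      exact abs_nonpos_iff.1 this
    have e3 : F (y - E y) = 0 := by
      have := hF (y - E y)
      rw [hp, mul_zero] at this
      exact abs_nonpos_iff.1 this
    rw [e1, e2, e3] at h1
    have h2 : aΩ y (y - E y) + cΩ y y (y - E y) = 0 := by
      have : ε * (aΩ y (y - E y) + cΩ y y (y - E y)) = 0 := by linarith
      exact (mul_eq_zero.1 this).resolve_left hε0.ne'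
    rw [map_sub, map_sub, hcΩ_skew] at h2
    have h3 := haΩ_coer y
    have h4 := (abs_le.1 (haΩ_bdd y (E y))).2
    have h5 := (abs_le.1 (hcΩ_bdd y y (E y))).1
    have h5' := (abs_le.1 (hcΩ_bdd y y (E y))).2
    have h6 := mul_le_mul_of_nonneg_left (hE_bdd y) (q0 y)
    have h7 := mul_le_mul_of_nonneg_left (hE_bdd y)
      (mul_nonneg (mul_nonneg hNΩ (q0 y)) (q0 y))
    have h8 : q y ^ 2 ≤ q y * (CE * p y) + NΩ * q y * q y * (CE * p y) := by linarith
    rcases (q0 y).eq_or_lt with h | h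
    · rw [← h]; simpa using hθ0.le
    · have h9 : q y ≤ CE * p y + NΩ * q y * (CE * p y) := by
        refine le_of_mul_le_mul_right ?_ h
        nlinarith
      have h10 := mul_le_mul_of_nonneg_left h9 hNΩ
      have h11 := mul_le_mul_of_nonneg_left hNCp (mul_nonneg hNΩ h.le)
      have h12 : (NΩ * q y) * (1 - θ * (1 - θ)) ≤ θ * (1 - θ * (1 - θ)) := by
        nlinarith [pow_pos hθ0 3]
      exact le_of_mul_le_mul_right h12 (by nlinarith)
  have hd : aω (y - z) (y - z) + ε * aΩ (y - z) (y - z) + cω (y - z) y (y - z)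
      + ε * cΩ (y - z) y (y - z) = 0 := by
    have h1 := hy (y - z)
    have h2 := hz (y - z)
    have h3 := hcω_skew z (y - z)
    have h4 := hcΩ_skew z (y - z)
    simp only [map_sub, LinearMap.sub_apply] at h1 h2 h3 h4 ⊢
    linear_combination h1 - h2 - h3 - ε * h4
  generalize hw : y - z = w at hd
  have a1 := haω_coer w
  have a2 := mul_le_mul_of_nonneg_left (haΩ_coer w) hε0.le
  have a3 := (abs_le.1 (hcω_bdd w y w)).1
  have a4 := mul_le_mul_of_nonneg_left (abs_le.1 (hcΩ_bdd w y w)).1 hε0.le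
  have a5 := mul_le_mul_of_nonneg_right hNp (sq_nonneg (p w))
  have a6 := mul_le_mul_of_nonneg_left
    (mul_le_mul_of_nonneg_right hNq (sq_nonneg (q w))) hε0.le
  have key : (1 - θ) * (ν * p w ^ 2 + ε * q w ^ 2) ≤ 0 := by linarith
  have k1 : 0 ≤ ν * p w ^ 2 := by positivity
  have k2 : 0 ≤ ε * q w ^ 2 := by positivity
  have k3 : ν * p w ^ 2 + ε * q w ^ 2 ≤ 0 := by
    by_contra! h
    have := mul_pos (sub_pos.2 hθ1) h
    linarith
  have hp : p w = 0 := by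
    have : ν * p w ^ 2 = 0 := by linarith
    simpa [hν.ne'] using this
  have hq : q w = 0 := by
    have : ε * q w ^ 2 = 0 := by linarith
    simpa [hε0.ne'] using this
  exact sub_eq_zero.1 (hw.trans (hpq w hp hq))
end

section
/- Let V be a finite-dimensional real inner product space, α > 0, f ≥ 0. Let a : V × V → ℝ be a bilinear map with a(v,v) ≥ α·‖v‖² for all v ∈ V, let c : V × V × V → ℝ be a trilinear map with c(v,v,v) = 0 for all v ∈ V, and let F : V → ℝ be a linear map with |F(v)| ≤ f·‖v‖ for all v ∈ V. Then there exists y ∈ V with ‖y‖ ≤ f/α such that a(y,v) + c(y,y,v) = F(v) for all v ∈ V. -/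
theorem aux_det_poly {V : Type*} [NormedAddCommGroup V] [InnerProductSpace ℝ V]
    [FiniteDimensional ℝ V] (A : V →L[ℝ] V) :
    ∃ p : Polynomial ℝ, p.natDegree ≤ Module.finrank ℝ V ∧
      ∀ t : ℝ, p.eval t = (ContinuousLinearMap.id ℝ V + t • A).det := by
  classical
  let b := Module.finBasis ℝ V
  let M := LinearMap.toMatrix b b (A : V →ₗ[ℝ] V)
  refine ⟨Matrix.det ((Polynomial.X : Polynomial ℝ) • M.map Polynomial.C +
    (1 : Matrix _ _ ℝ).map Polynomial.C), ?_, ?_⟩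
  · simpa using Polynomial.natDegree_det_X_add_C_le M 1
  · intro t
    rw [ContinuousLinearMap.det, ← LinearMap.det_toMatrix b, ← Polynomial.coe_evalRingHom,
      RingHom.map_det]
    congr 1
    ext i j
    simp [M, LinearMap.toMatrix_apply, Matrix.one_apply, Finsupp.single_apply, add_comm, eq_comm]
    split_ifs <;> simp [mul_comm]

theorem aux_interp {V : Type*} [NormedAddCommGroup V] [InnerProductSpace ℝ V]
    [FiniteDimensional ℝ V] (δ : ℝ) (hδ : 0 < δ) :
    ∃ (n : ℕ) (w t : ℕ → ℝ), (∑ i ∈ Finset.range n, w i = 1) ∧ (∀ i, 0 < t i ∧ t i < δ) ∧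
      ∀ A : V →L[ℝ] V, (ContinuousLinearMap.id ℝ V + A).det =
        ∑ i ∈ Finset.range n, w i * (ContinuousLinearMap.id ℝ V + t i • A).det := by
  classical
  let n := Module.finrank ℝ V + 1
  let t : ℕ → ℝ := fun i => δ / (i + 2)
  have htinj : Function.Injective t := by
    intro i j h
    simp only [t] at h
    have hi : (0 : ℝ) < i + 2 := by positivity
    have hj : (0 : ℝ) < j + 2 := by positivity
    rw [div_eq_div_iff hi.ne' hj.ne'] at h
    have := mul_left_cancel₀ hδ.ne' h
    have : (i : ℝ) = j := by linarith
    exact_mod_cast this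
  refine ⟨n, fun i => (Lagrange.basis (Finset.range n) t i).eval 1, t, ?_, ?_, ?_⟩
  · rw [← Polynomial.eval_finsetSum, Lagrange.sum_basis htinj.injOn (by simp [n])]
    simp
  · intro i
    refine ⟨by positivity, ?_⟩
    rw [div_lt_iff₀ (by positivity)]
    have : (0 : ℝ) ≤ i := by positivity
    nlinarith
  · intro A
    obtain ⟨p, hp, hpe⟩ := aux_det_poly A
    have h1 := Lagrange.eq_interpolate (f := p) (s := Finset.range n) (v := t) htinj.injOn (by
      refine lt_of_le_of_lt (Polynomial.degree_le_of_natDegree_le hp) ?_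
      simp [n]
      exact_mod_cast Nat.lt_succ_self _)
    have h2 := congrArg (Polynomial.eval 1) h1
    rw [Lagrange.interpolate_apply, Polynomial.eval_finsetSum, hpe, one_smul] at h2
    rw [h2]
    refine Finset.sum_congr rfl fun i _ => ?_
    rw [Polynomial.eval_mul, Polynomial.eval_C, hpe, mul_comm]

open MeasureTheory Metric Set in
theorem aux_small {V : Type*} [NormedAddCommGroup V] [InnerProductSpace ℝ V]
    [FiniteDimensional ℝ V] [MeasurableSpace V] [BorelSpace V] (μ : Measure V) [μ.IsAddHaarMeasure]
    (ρ : ℝ) (hρ : 0 < ρ) (r : V → V)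
    (hd : ∀ x ∈ closedBall (0 : V) ρ, ContDiffAt ℝ 1 r x)
    (hn : ∀ x ∈ closedBall (0 : V) ρ, ‖r x‖ = ρ)
    (hs : ∀ x, ‖x‖ = ρ → r x = x) :
    ∃ δ > 0, ∀ t : ℝ, 0 < t → t < δ →
      IntegrableOn (fun x => (ContinuousLinearMap.id ℝ V +
        t • (fderiv ℝ r x - ContinuousLinearMap.id ℝ V)).det) (ball 0 ρ) μ ∧
      ∫ x in ball 0 ρ, (ContinuousLinearMap.id ℝ V +
        t • (fderiv ℝ r x - ContinuousLinearMap.id ℝ V)).det ∂μ = μ.real (ball 0 ρ) := by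
  have hg : ContDiffOn ℝ 1 (fun x => r x - x) (closedBall 0 ρ) := fun x hx =>
    ((hd x hx).sub contDiffAt_id).contDiffWithinAt
  obtain ⟨K, hK⟩ := hg.exists_lipschitzOnWith (by norm_num) (convex_closedBall 0 ρ)
    (isCompact_closedBall 0 ρ)
  have hder : ∀ x ∈ ball (0 : V) ρ, HasFDerivAt (fun x => r x - x)
      (fderiv ℝ r x - ContinuousLinearMap.id ℝ V) x := fun x hx =>
    (((hd x (ball_subset_closedBall hx)).differentiableAt (by norm_num)).hasFDerivAt).sub
      (hasFDerivAt_id x)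
  have hKn : ∀ x ∈ ball (0 : V) ρ, ‖fderiv ℝ r x - ContinuousLinearMap.id ℝ V‖ ≤ K := by
    intro x hx
    exact (hder x hx).le_of_lipschitzOn
      (Filter.mem_of_superset (isOpen_ball.mem_nhds hx) ball_subset_closedBall) hK
  -- positivity of the determinant near the identity
  have hpos : ∃ η > 0, ∀ A : V →L[ℝ] V, ‖A‖ < η → 0 < (ContinuousLinearMap.id ℝ V + A).det := by
    have hc : Continuous fun A : V →L[ℝ] V => (ContinuousLinearMap.id ℝ V + A).det :=
      ContinuousLinearMap.continuous_det.comp (by fun_prop)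
    have h0 : (fun A : V →L[ℝ] V => (ContinuousLinearMap.id ℝ V + A).det) 0 = 1 := by
      simp [ContinuousLinearMap.det]
    have := hc.continuousAt.eventually (IsOpen.mem_nhds (isOpen_Ioi (a := (0 : ℝ))) (by
      show (0 : ℝ) < (fun A : V →L[ℝ] V => (ContinuousLinearMap.id ℝ V + A).det) 0
      rw [h0]; norm_num))
    obtain ⟨η, hη, h⟩ := Metric.eventually_nhds_iff.1 this
    exact ⟨η, hη, fun A hA => h (by simpa using hA)⟩
  obtain ⟨η, hη, hpos⟩ := hpos
  refine ⟨min 1 (min 1 η / (K + 1)), by positivity, fun t ht htδ => ?_⟩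
  have ht1 : t < 1 := htδ.trans_le (min_le_left _ _)
  have htK : t * (K + 1) < min 1 η := by
    rw [← lt_div_iff₀ (by positivity)]; exact htδ.trans_le (min_le_right _ _)
  have htK1 : t * K < 1 := by
    have := htK.trans_le (min_le_left _ _); nlinarith
  have htKη : t * K < η := by
    have := htK.trans_le (min_le_right _ _); nlinarith
  let P : V → V := fun x => x + t • (r x - x)
  have hlip : ∀ x ∈ closedBall (0 : V) ρ, ∀ y ∈ closedBall (0 : V) ρ,
      ‖P x - P y - (x - y)‖ ≤ t * K * ‖x - y‖ := by
    intro x hx y hy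
    have h1 := hK.norm_sub_le hx hy
    have : P x - P y - (x - y) = t • ((r x - x) - (r y - y)) := by
      simp only [P]; module
    rw [this, norm_smul, Real.norm_of_nonneg ht.le, mul_assoc]
    exact mul_le_mul_of_nonneg_left h1 ht.le
  have hinj : InjOn P (closedBall 0 ρ) := by
    intro x hx y hy hxy
    have h := hlip x hx y hy
    rw [hxy, sub_self, zero_sub, norm_neg] at h
    have : ‖x - y‖ = 0 := by
      by_contra h0
      have : 0 < ‖x - y‖ := lt_of_le_of_ne (norm_nonneg _) (Ne.symm h0)
      nlinarith
    exact sub_eq_zero.1 (norm_eq_zero.1 this)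
  have hPd : ∀ x ∈ ball (0 : V) ρ, HasFDerivAt P (ContinuousLinearMap.id ℝ V +
        t • (fderiv ℝ r x - ContinuousLinearMap.id ℝ V)) x := fun x hx =>
    (hasFDerivAt_id x).add ((hder x hx).const_smul t)
  have hPc : ContinuousOn P (closedBall 0 ρ) :=
    continuousOn_id.add (hg.continuousOn.const_smul t)
  have hPb : ∀ x ∈ ball (0 : V) ρ, P x ∈ ball (0 : V) ρ := by
    intro x hx
    have h1 := hn x (ball_subset_closedBall hx)
    simp only [mem_ball_zero_iff] at hx ⊢
    have : P x = (1 - t) • x + t • r x := by simp only [P]; module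
    rw [this]
    refine (norm_add_le _ _).trans_lt ?_
    rw [norm_smul, norm_smul, Real.norm_of_nonneg ht.le, Real.norm_of_nonneg (by linarith), h1]
    nlinarith
  have hopen : IsOpen (P '' ball 0 ρ) := by
    have happ : ApproximatesLinearOn P ((ContinuousLinearEquiv.refl ℝ V : V ≃L[ℝ] V) : V →L[ℝ] V)
        (ball 0 ρ) (⟨t, ht.le⟩ * K) := fun x hx y hy =>
      hlip x (ball_subset_closedBall hx) y (ball_subset_closedBall hy)
    refine happ.open_image (ContinuousLinearEquiv.refl ℝ V).toNonlinearRightInverse isOpen_ball ?_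
    rcases subsingleton_or_nontrivial V with h | h
    · exact Or.inl h
    · right
      have : ((ContinuousLinearEquiv.refl ℝ V).toNonlinearRightInverse).nnnorm = 1 := by
        show ‖((ContinuousLinearEquiv.refl ℝ V).symm : V →L[ℝ] V)‖₊ = 1
        exact ContinuousLinearMap.nnnorm_id
      rw [this, inv_one]
      exact_mod_cast htK1
  have himg : P '' ball 0 ρ = ball 0 ρ := by
    refine Subset.antisymm (image_subset_iff.2 hPb) ?_
    refine (convex_ball (0 : V) ρ).isPreconnected.subset_of_closure_inter_subset hopen
      ⟨P 0, hPb 0 (mem_ball_self hρ), mem_image_of_mem _ (mem_ball_self hρ)⟩ ?_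
    rintro y ⟨hy, hyb⟩
    have hcl : IsClosed (P '' closedBall 0 ρ) :=
      ((isCompact_closedBall 0 ρ).image_of_continuousOn hPc).isClosed
    obtain ⟨x, hx, rfl⟩ := closure_minimal (image_mono ball_subset_closedBall) hcl hy
    refine mem_image_of_mem _ ?_
    rw [mem_closedBall_zero_iff] at hx
    rw [mem_ball_zero_iff] at hyb ⊢
    refine lt_of_le_of_ne hx fun h => ?_
    have : P x = x := by simp [P, hs x h]
    rw [this] at hyb
    linarith
  have hdet : ∀ x ∈ ball (0 : V) ρ, |(ContinuousLinearMap.id ℝ V +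
        t • (fderiv ℝ r x - ContinuousLinearMap.id ℝ V)).det| = (ContinuousLinearMap.id ℝ V +
        t • (fderiv ℝ r x - ContinuousLinearMap.id ℝ V)).det := by
    intro x hx
    refine abs_of_pos (hpos _ ?_)
    rw [norm_smul, Real.norm_of_nonneg ht.le]
    exact (mul_le_mul_of_nonneg_left (hKn x hx) ht.le).trans_lt htKη
  have hPinj := hinj.mono (ball_subset_closedBall (x := (0 : V)) (ε := ρ))
  have hI := integrableOn_image_iff_integrableOn_abs_det_fderiv_smul μ measurableSet_ball
    (fun x hx => (hPd x hx).hasFDerivWithinAt) hPinj (fun _ => (1 : ℝ))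
  have hE := integral_image_eq_integral_abs_det_fderiv_smul μ measurableSet_ball
    (fun x hx => (hPd x hx).hasFDerivWithinAt) hPinj (fun _ => (1 : ℝ))
  rw [himg] at hI hE
  have h1 : IntegrableOn (fun _ : V => (1 : ℝ)) (ball 0 ρ) μ :=
    integrableOn_const measure_ball_lt_top.ne
  constructor
  · refine (hI.1 h1).congr_fun (fun x hx => ?_) measurableSet_ball
    simp only [smul_eq_mul, mul_one]
    exact hdet x hx
  · rw [setIntegral_const, smul_eq_mul, mul_one] at hE
    rw [hE]
    refine setIntegral_congr_fun measurableSet_ball (fun x hx => ?_)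
    simp only [smul_eq_mul, mul_one]
    exact (hdet x hx).symm

open MeasureTheory Metric Set in
theorem aux_noretract {V : Type*} [NormedAddCommGroup V] [InnerProductSpace ℝ V]
    [FiniteDimensional ℝ V] (ρ : ℝ) (hρ : 0 < ρ) (r : V → V)
    (hd : ∀ x ∈ closedBall (0 : V) ρ, ContDiffAt ℝ 1 r x)
    (hn : ∀ x ∈ closedBall (0 : V) ρ, ‖r x‖ = ρ)
    (hs : ∀ x, ‖x‖ = ρ → r x = x) : False := by
  letI : MeasurableSpace V := borel V
  haveI : BorelSpace V := ⟨rfl⟩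
  let μ : Measure V := Measure.addHaar
  obtain ⟨δ, hδ, h⟩ := aux_small μ ρ hρ r hd hn hs
  obtain ⟨n, w, t, hw, ht, hA⟩ := aux_interp (V := V) δ hδ
  have hzero : ∀ x ∈ ball (0 : V) ρ, (fderiv ℝ r x).det = 0 := by
    intro x hx
    have hdx := ((hd x (ball_subset_closedBall hx)).differentiableAt (by norm_num)).hasFDerivAt
    by_contra h0
    have hsurj : Function.Surjective (fderiv ℝ r x) := by
      exact (LinearMap.equivOfDetNeZero ((fderiv ℝ r x : V →L[ℝ] V) : V →ₗ[ℝ] V) h0).surjective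
    obtain ⟨v, hv⟩ := hsurj (r x)
    have h1 := hdx.norm_sq
    have h2 : HasFDerivAt (fun y => ‖r y‖ ^ 2) (0 : V →L[ℝ] ℝ) x := by
      refine (hasFDerivAt_const (ρ ^ 2) x).congr_of_eventuallyEq ?_
      filter_upwards [isOpen_ball.mem_nhds hx] with y hy
      rw [hn y (ball_subset_closedBall hy)]
    have h3 := congrArg (fun L : V →L[ℝ] ℝ => L v) (h1.unique h2)
    simp [hv, hn x (ball_subset_closedBall hx)] at h3
    exact hρ.ne' h3
  have hsum : ∫ x in ball (0 : V) ρ, (∑ i ∈ Finset.range n, w i * (ContinuousLinearMap.id ℝ V +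
        t i • (fderiv ℝ r x - ContinuousLinearMap.id ℝ V)).det) ∂μ = μ.real (ball 0 ρ) := by
    rw [integral_finsetSum _ fun i _ => ((h (t i) (ht i).1 (ht i).2).1).const_mul (w i)]
    simp_rw [integral_const_mul, fun i => (h (t i) (ht i).1 (ht i).2).2]
    rw [← Finset.sum_mul, hw, one_mul]
  have hz : ∫ x in ball (0 : V) ρ, (∑ i ∈ Finset.range n, w i * (ContinuousLinearMap.id ℝ V +
        t i • (fderiv ℝ r x - ContinuousLinearMap.id ℝ V)).det) ∂μ = 0 := by
    rw [setIntegral_congr_fun (g := fun _ => (0 : ℝ)) measurableSet_ball]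
    · simp
    · intro x hx
      simp only
      rw [← hA, add_sub_cancel, hzero x hx]
  have hp : 0 < μ.real (ball (0 : V) ρ) :=
    ENNReal.toReal_pos (measure_ball_pos μ 0 hρ).ne' measure_ball_lt_top.ne
  linarith

open Metric Set in
theorem aux_zero {V : Type*} [NormedAddCommGroup V] [InnerProductSpace ℝ V]
    [FiniteDimensional ℝ V] (R : ℝ) (hR : 0 ≤ R) (Φ : V → V) (hΦ : ContDiff ℝ 1 Φ)
    (hpos : ∀ x, R < ‖x‖ → 0 ≤ inner ℝ (Φ x) x) : ∃ x, Φ x = 0 := by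
  by_contra! hne
  obtain ⟨x₀, -, hx₀⟩ := (isCompact_closedBall (0 : V) R).exists_isMinOn
    ⟨0, mem_closedBall_self hR⟩ hΦ.continuous.norm.continuousOn
  set m := ‖Φ x₀‖ with hm
  have hm0 : 0 < m := norm_pos_iff.2 (hne x₀)
  have hmin : ∀ x, ‖x‖ ≤ R → m ≤ ‖Φ x‖ := fun x hx => hx₀ (mem_closedBall_zero_iff.2 hx)
  let ρ := R + 1
  have hρ : 0 < ρ := by positivity
  let ε := m / (R + 1)
  have hε : 0 < ε := by positivity
  have hεR : ε * (R + 1) = m := by simp only [ε]; field_simp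
  let H : V → V := fun x => (ρ ^ 2 - ‖x‖ ^ 2) • Φ x + ε • x
  have hH : ContDiff ℝ 1 H :=
    ((contDiff_const.sub (contDiff_norm_sq ℝ)).smul hΦ).add (contDiff_const.smul contDiff_id)
  have hH0 : ∀ x ∈ closedBall (0 : V) ρ, H x ≠ 0 := by
    intro x hx h0
    rw [mem_closedBall_zero_iff] at hx
    rcases le_or_gt ‖x‖ R with hxR | hxR
    · have h1 : (ρ ^ 2 - ‖x‖ ^ 2) • Φ x = -(ε • x) := eq_neg_of_add_eq_zero_left h0
      have h2 := congrArg norm h1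
      have h3 : 1 ≤ ρ ^ 2 - ‖x‖ ^ 2 := by simp only [ρ]; nlinarith [norm_nonneg x]
      rw [norm_neg, norm_smul, norm_smul, Real.norm_of_nonneg (by linarith),
        Real.norm_of_nonneg hε.le] at h2
      nlinarith [hmin x hxR, norm_nonneg (Φ x)]
    · have h1 : inner ℝ (H x) x = 0 := by rw [h0, inner_zero_left]
      simp only [H, inner_add_left, inner_smul_left, real_inner_self_eq_norm_sq] at h1
      have h3 : 0 ≤ ρ ^ 2 - ‖x‖ ^ 2 := by nlinarith [norm_nonneg x]
      have h4 := mul_nonneg h3 (hpos x hxR)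
      have h5 : 0 < ‖x‖ := hR.trans_lt hxR
      have h6 : 0 < ε * ‖x‖ ^ 2 := by positivity
      simp at h1
      linarith
  refine aux_noretract ρ hρ (fun x => (ρ * ‖H x‖⁻¹) • H x) ?_ ?_ ?_
  · intro x hx
    exact (contDiffAt_const.mul ((hH.contDiffAt.norm ℝ (hH0 x hx)).inv
      (norm_ne_zero_iff.2 (hH0 x hx)))).smul hH.contDiffAt
  · intro x hx
    have := norm_pos_iff.2 (hH0 x hx)
    rw [norm_smul, Real.norm_of_nonneg (by positivity)]
    field_simp
  · intro x hx
    have : H x = ε • x := by simp [H, hx]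
    simp only [this, norm_smul, Real.norm_of_nonneg hε.le, hx, smul_smul]
    have : ρ * (ε * ρ)⁻¹ * ε = 1 := by field_simp
    rw [this, one_smul]

/-- Abstract form of Proposition 3.1: existence of a solution of the
discretized regularized penalized Navier–Stokes system in a finite-dimensional real
inner product space, with the bound `‖y‖ ≤ f/α`. -/
theorem stmt_9 (V : Type*) [NormedAddCommGroup V] [InnerProductSpace ℝ V]
    [FiniteDimensional ℝ V]
    (α f : ℝ) (hα : 0 < α) (hf : 0 ≤ f)
    (a : V →ₗ[ℝ] V →ₗ[ℝ] ℝ) (ha : ∀ v, α * ‖v‖ ^ 2 ≤ a v v)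
    (c : V →ₗ[ℝ] V →ₗ[ℝ] V →ₗ[ℝ] ℝ) (hc : ∀ v, c v v v = 0)
    (F : V →ₗ[ℝ] ℝ) (hF : ∀ v, |F v| ≤ f * ‖v‖) :
    ∃ y : V, ‖y‖ ≤ f / α ∧ ∀ v, a y v + c y y v = F v := by
  let b := stdOrthonormalBasis ℝ V
  let Φ : V → V := fun y => ∑ i, (a y (b i) + c y y (b i) - F (b i)) • b i
  have hin : ∀ y v, inner ℝ (Φ y) v = a y v + c y y v - F v := by
    intro y v
    have hv : ∀ L : V →ₗ[ℝ] ℝ, L v = ∑ i, inner ℝ (b i) v * L (b i) := by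
      intro L
      conv_lhs => rw [← b.sum_repr' v]
      simp
    have := hv (a y + c y y - F)
    simp only [LinearMap.sub_apply, LinearMap.add_apply] at this
    rw [this]
    simp only [Φ, sum_inner, inner_smul_left]
    exact Finset.sum_congr rfl fun i _ => by simp [mul_comm]
  have hsm : ContDiff ℝ 1 Φ := by
    refine ContDiff.sum fun i _ => ContDiff.smul ?_ contDiff_const
    refine ContDiff.sub (ContDiff.add ?_ ?_) contDiff_const
    · exact (LinearMap.toContinuousLinearMap (a.flip (b i))).contDiff
    · have : (fun y => c y y (b i)) = fun y => ∑ j, inner ℝ (b j) y * c y (b j) (b i) := by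
        ext y
        have : c y y = c y (∑ j, inner ℝ (b j) y • b j) := by rw [b.sum_repr' y]
        rw [this]
        simp
      rw [this]
      refine ContDiff.sum fun j _ => ContDiff.mul (contDiff_const.inner ℝ contDiff_id) ?_
      exact (LinearMap.toContinuousLinearMap ((c.flip (b j)).flip (b i))).contDiff
  obtain ⟨y, hy⟩ := aux_zero (f / α) (by positivity) Φ hsm (by
    intro x hx
    rw [hin, hc]
    rw [div_lt_iff₀ hα] at hx
    have h1 := (abs_le.1 (hF x)).2
    nlinarith [ha x, norm_nonneg x])
  have hz : ∀ v, a y v + c y y v - F v = 0 := fun v => by rw [← hin, hy, inner_zero_left]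
  refine ⟨y, ?_, fun v => sub_eq_zero.1 (hz v)⟩
  have h0 := hz y
  rw [hc] at h0
  have h1 := (abs_le.1 (hF y)).2
  rw [le_div_iff₀ hα]
  rcases (norm_nonneg y).eq_or_lt with h | h
  · rw [← h]; simpa using hf
  · have h2 : ‖y‖ * (‖y‖ * α) ≤ ‖y‖ * f := by nlinarith [ha y]
    exact le_of_mul_le_mul_left h2 h
end

section
/- Let m, n, k be natural numbers, K ⊆ ℝ^m a nonempty bounded set, J : ℝ^m × ℝ^n → ℝ lower semicontinuous and bounded from below, and C : ℝ^m × ℝ^n → ℝ^k continuous. Assume J is coercive in Y uniformly with respect to G ∈ K, i.e. for every M ∈ ℝ there exists R > 0 such that J(G, Y) ≥ M whenever G ∈ K and ‖Y‖ ≥ R. Assume the admissibility condition: there exists (Ĝ, Ŷ) with Ĝ ∈ K and C(Ĝ, Ŷ) = 0. Then there exists a pair (G̃, Ỹ) ∈ ℝ^m × ℝ^n with G̃ in the closure of K, C(G̃, Ỹ) = 0, and J(G̃, Ỹ) ≤ inf { J(G, Y) : G ∈ K, C(G, Y) = 0 }. -/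
/-- Convergence content of Proposition 3.3 ("Prop 3.a") of the paper:
with `K` nonempty and bounded, `J` lower semicontinuous, bounded from below and coercive
in `Y` uniformly in `G ∈ K`, `C` continuous, and the admissible set nonempty, there is a
pair `(G̃, Ỹ)` with `G̃` in the closure of `K`, satisfying the constraint `C(G̃,Ỹ) = 0`,
whose cost does not exceed the infimum of `J` over the admissible set. -/
theorem stmt_15 (m n k : ℕ) (K : Set (EuclideanSpace ℝ (Fin m)))
    (hKne : K.Nonempty) (hKbd : Bornology.IsBounded K)
    (J : EuclideanSpace ℝ (Fin m) → EuclideanSpace ℝ (Fin n) → ℝ)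
    (hJlsc : LowerSemicontinuous
      (fun p : EuclideanSpace ℝ (Fin m) × EuclideanSpace ℝ (Fin n) => J p.1 p.2))
    (hJbdd : ∃ B : ℝ, ∀ G Y, -B ≤ J G Y)
    (C : EuclideanSpace ℝ (Fin m) → EuclideanSpace ℝ (Fin n) → EuclideanSpace ℝ (Fin k))
    (hC : Continuous
      (fun p : EuclideanSpace ℝ (Fin m) × EuclideanSpace ℝ (Fin n) => C p.1 p.2))
    (hcoer : ∀ M : ℝ, ∃ R : ℝ, 0 < R ∧ ∀ G Y, G ∈ K → R ≤ ‖Y‖ → M ≤ J G Y)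
    (hadm : ∃ Ghat Yhat, Ghat ∈ K ∧ C Ghat Yhat = 0) :
    ∃ Gt Yt, Gt ∈ closure K ∧ C Gt Yt = 0 ∧
      J Gt Yt ≤ sInf {r : ℝ | ∃ G Y, G ∈ K ∧ C G Y = 0 ∧ r = J G Y} := by
  obtain ⟨G0, Y0, hG0, hC0⟩ := hadm
  obtain ⟨R, hR, hRJ⟩ := hcoer (J G0 Y0)
  have hS : IsCompact ((closure K ×ˢ Metric.closedBall (0 : EuclideanSpace ℝ (Fin n))
      (max R ‖Y0‖)) ∩ {p | C p.1 p.2 = 0}) :=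
    (hKbd.isCompact_closure.prod (isCompact_closedBall _ _)).inter_right
      (isClosed_eq hC continuous_const)
  have h0 : (G0, Y0) ∈ ((closure K ×ˢ Metric.closedBall (0 : EuclideanSpace ℝ (Fin n))
      (max R ‖Y0‖)) ∩ {p | C p.1 p.2 = 0}) :=
    ⟨⟨subset_closure hG0, by simp⟩, hC0⟩
  obtain ⟨⟨Gt, Yt⟩, ⟨⟨hGt, _⟩, hCt⟩, hmin⟩ :=
    LowerSemicontinuousOn.exists_isMinOn ⟨_, h0⟩ hS (hJlsc.lowerSemicontinuousOn _)
  refine ⟨Gt, Yt, hGt, hCt, le_csInf ⟨_, G0, Y0, hG0, hC0, rfl⟩ ?_⟩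
  rintro r ⟨G, Y, hG, hCG, rfl⟩
  rcases le_total ‖Y‖ (max R ‖Y0‖) with h | h
  · exact hmin (a := (G, Y)) ⟨⟨subset_closure hG, by simpa using h⟩, hCG⟩
  · exact (hmin h0).trans (hRJ G Y hG ((le_max_left _ _).trans h))
end
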